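/- arXiv:1205.5754 — 2 statements merged into one kernel-verified Lean document; each statement's English description precedes it below -/
import Mathlib

section
/- Let η : Fin 4 → Fin 4 → ℝ be the Minkowski metric (η μ ν = 0 for μ ≠ ν, η 0 0 = 1, η k k = −1 for k = 1,2,3), let γ : Fin 4 → Matrix (Fin 4) (Fin 4) ℂ satisfy the Clifford relations γ μ * γ ν + γ ν * γ μ = (2 * η μ ν : ℂ) • 1 for all μ, ν, define σ μ ν := (Complex.I/2) • (γ μ * γ ν − γ ν * γ μ), σ' μ ν := (η μ μ * η ν ν : ℂ) • σ μ ν, τ μ ν := (1/3 : ℂ) • ((2 * Complex.I * η μ ν : ℂ) • 1 − σ' μ ν), and the lowered matrices γ' μ := (η μ μ : ℂ) • γ μ. Let m be a real number. Then for all row vectors ψ̄, π̄_α : Fin 4 → ℂ (α ∈ Fin 4) and column vectors ψ, π_β : Fin 4 → ℂ (β ∈ Fin 4), with ⟨r, M, v⟩ := ∑_{j,k} r j * M j k * v k and r ⬝ v := ∑_j r j * v j: ∑_{α,β} ⟨ π̄_α − (Complex.I/2) • (ψ̄ ᵥ* γ α), (Complex.I*m) • τ α β, π_β + (Complex.I/2)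 • ((γ β).mulVec ψ) ⟩ + m * (ψ̄ ⬝ ψ) = Complex.I*m * ( ∑_{α,β} ⟨π̄_α, τ α β, π_β⟩ + (1/6) * ∑_α ⟨π̄_α, γ' α, ψ⟩ − (1/6) * ∑_β ⟨ψ̄, γ' β, π_β⟩ ) + (4*m/3) * (ψ̄ ⬝ ψ). -/
open Matrix

/-- The scalar `u ⬝ M ⬝ v = ∑_{j,k} u j * M j k * v k`. -/
noncomputable def triple (u : Fin 4 → ℂ) (M : Matrix (Fin 4) (Fin 4) ℂ) (v : Fin 4 → ℂ) : ℂ :=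
  ∑ j : Fin 4, ∑ k : Fin 4, u j * M j k * v k

/-- The scalar `u ⬝ v = ∑_j u j * v j`. -/
noncomputable def dotc (u v : Fin 4 → ℂ) : ℂ := ∑ j : Fin 4, u j * v j

theorem triple_eq (u : Fin 4 → ℂ) (M : Matrix (Fin 4) (Fin 4) ℂ) (v : Fin 4 → ℂ) :
    triple u M v = u ⬝ᵥ (M *ᵥ v) := by
  simp only [triple, dotProduct, mulVec, Finset.mul_sum, mul_assoc]

theorem triple_expand (p s : Fin 4 → ℂ) (A B T : Matrix (Fin 4) (Fin 4) ℂ) (q t : Fin 4 → ℂ)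
    (c d : ℂ) :
    triple (p - c • (s ᵥ* A)) (d • T) (q + c • (B *ᵥ t))
      = d * triple p T q + d * c * triple p (T * B) t - d * c * triple s (A * T) q
        - d * c * c * triple s (A * T * B) t := by
  simp only [triple_eq, sub_dotProduct, smul_mulVec, mulVec_add, mulVec_smul, dotProduct_add,
    dotProduct_smul, smul_dotProduct, smul_eq_mul, ← dotProduct_mulVec, mulVec_mulVec, smul_mul_assoc, mul_smul_comm,
    Matrix.mul_assoc]
  ring

theorem triple_sum {ι : Type*} (S : Finset ι) (u : Fin 4 → ℂ)
    (M : ι → Matrix (Fin 4) (Fin 4) ℂ) (v : Fin 4 → ℂ) :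
    ∑ i ∈ S, triple u (M i) v = triple u (∑ i ∈ S, M i) v := by
  simp only [triple_eq, sum_mulVec, dotProduct_sum]

theorem triple_smul (u : Fin 4 → ℂ) (c : ℂ)
    (M : Matrix (Fin 4) (Fin 4) ℂ) (v : Fin 4 → ℂ) :
    triple u (c • M) v = c * triple u M v := by
  simp only [triple_eq, smul_mulVec, dotProduct_smul, smul_eq_mul]

/-- Algebraic identity expanding the covariant Dirac Hamiltonian density:
`(π̄^α − (i/2) ψ̄ γ^α) i m τ_{αβ} (π^β + (i/2) γ^β ψ) + m ψ̄ ψ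
 = i m (π̄^α τ_{αβ} π^β + (1/6) π̄^α γ_α ψ − (1/6) ψ̄ γ_β π^β) + (4/3) m ψ̄ ψ`. -/
theorem dirac_hamiltonian_expansion
    (η : Fin 4 → Fin 4 → ℝ)
    (hη_off : ∀ μ ν, μ ≠ ν → η μ ν = 0)
    (hη_00 : η 0 0 = 1)
    (hη_kk : ∀ k : Fin 4, k ≠ 0 → η k k = -1)
    (γ : Fin 4 → Matrix (Fin 4) (Fin 4) ℂ)
    (hγ : ∀ μ ν, γ μ * γ ν + γ ν * γ μ = (2 * (η μ ν : ℂ)) • 1)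
    (σ : Fin 4 → Fin 4 → Matrix (Fin 4) (Fin 4) ℂ)
    (hσ : ∀ μ ν, σ μ ν = (Complex.I / 2) • (γ μ * γ ν - γ ν * γ μ))
    (σ' : Fin 4 → Fin 4 → Matrix (Fin 4) (Fin 4) ℂ)
    (hσ' : ∀ μ ν, σ' μ ν = ((η μ μ * η ν ν : ℝ) : ℂ) • σ μ ν)
    (τ : Fin 4 → Fin 4 → Matrix (Fin 4) (Fin 4) ℂ)
    (hτ : ∀ μ ν, τ μ ν = (1/3 : ℂ) • ((2 * Complex.I * (η μ ν : ℂ)) • 1 - σ' μ ν))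
    (γ' : Fin 4 → Matrix (Fin 4) (Fin 4) ℂ)
    (hγ' : ∀ μ, γ' μ = ((η μ μ : ℂ)) • γ μ)
    (m : ℝ)
    (ψb ψ : Fin 4 → ℂ) (πb π : Fin 4 → (Fin 4 → ℂ)) :
    (∑ α : Fin 4, ∑ β : Fin 4,
        triple (πb α - (Complex.I / 2) • (ψb ᵥ* γ α))
               ((Complex.I * (m : ℂ)) • τ α β)
               (π β + (Complex.I / 2) • ((γ β).mulVec ψ)))
      + (m : ℂ) * dotc ψb ψ
    = Complex.I * (m : ℂ) *
        ((∑ α : Fin 4, ∑ β : Fin 4, triple (πb α) (τ α β) (π β))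
          + (1/6 : ℂ) * (∑ α : Fin 4, triple (πb α) (γ' α) ψ)
          - (1/6 : ℂ) * (∑ β : Fin 4, triple ψb (γ' β) (π β)))
      + (4 * (m : ℂ) / 3) * dotc ψb ψ := by
  have he : ∀ μ, (η μ μ : ℂ) * (η μ μ : ℂ) = 1 := by
    intro μ
    by_cases h : μ = 0
    · subst h; simp [hη_00]
    · simp [hη_kk μ h]
  have hsq : ∀ μ, γ μ * γ μ = (η μ μ : ℂ) • 1 := by
    intro μ
    have h := hγ μ μ
    rw [← two_smul ℂ, mul_smul] at h
    exact smul_right_injective _ (two_ne_zero : (2 : ℂ) ≠ 0) h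
  have hanti : ∀ μ ν, μ ≠ ν → γ ν * γ μ = - (γ μ * γ ν) := by
    intro μ ν h
    have h1 := hγ μ ν
    rw [hη_off μ ν h] at h1
    simp only [Complex.ofReal_zero, mul_zero, zero_smul] at h1
    exact (neg_eq_of_add_eq_zero_right h1).symm
  have hτd : ∀ μ, τ μ μ = (2 * Complex.I / 3 * (η μ μ : ℂ)) • 1 := by
    intro μ
    rw [hτ, hσ', hσ, sub_self, smul_zero, smul_zero, sub_zero, smul_smul]
    congr 1; ring
  have hτo : ∀ μ ν, μ ≠ ν →
      τ μ ν = (-Complex.I / 3 * ((η μ μ : ℂ) * (η ν ν : ℂ))) • (γ μ * γ ν) := by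
    intro μ ν h
    rw [hτ, hσ', hσ, hη_off μ ν h, hanti μ ν h]
    push_cast
    module
  have hA : ∀ α β, γ α * τ α β =
      (if α = β then 2 * Complex.I / 3 else -Complex.I / 3 : ℂ) • γ' β := by
    intro α β
    split_ifs with h
    · subst h
      rw [hτd, hγ', mul_smul_comm, mul_one, smul_smul]
    · rw [hτo α β h, hγ', mul_smul_comm, ← mul_assoc (γ α), hsq, smul_mul_assoc, one_mul, smul_smul,
        smul_smul]
      congr 1
      linear_combination (-Complex.I / 3 * (η β β : ℂ)) * he α
  have hB : ∀ α β, τ α β * γ β =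
      (if α = β then 2 * Complex.I / 3 else -Complex.I / 3 : ℂ) • γ' α := by
    intro α β
    split_ifs with h
    · subst h
      rw [hτd, hγ', smul_mul_assoc, one_mul, smul_smul]
    · rw [hτo α β h, hγ', smul_mul_assoc, mul_assoc, hsq, mul_smul_comm, mul_one, smul_smul,
        smul_smul]
      congr 1
      linear_combination (-Complex.I / 3 * (η α α : ℂ)) * he β
  have hc1 : ∀ β : Fin 4, ∑ α : Fin 4,
      (if α = β then 2 * Complex.I / 3 else -Complex.I / 3 : ℂ) = -Complex.I / 3 := by
    intro β
    fin_cases β <;> simp [Fin.sum_univ_four] <;> ring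
  have hc2 : ∀ α : Fin 4, ∑ β : Fin 4,
      (if α = β then 2 * Complex.I / 3 else -Complex.I / 3 : ℂ) = -Complex.I / 3 := by
    intro α
    fin_cases α <;> simp [Fin.sum_univ_four] <;> ring
  have hg : ∀ β, γ' β * γ β = 1 := by
    intro β
    rw [hγ', smul_mul_assoc, hsq, smul_smul, he, one_smul]
  have hd : triple ψb 1 ψ = dotc ψb ψ := by
    rw [triple_eq, one_mulVec]; rfl
  simp only [triple_expand]
  simp only [hA, hB, smul_mul_assoc, hg, triple_smul, hd,
    Finset.sum_add_distrib, Finset.sum_sub_distrib, ← Finset.mul_sum, ← Finset.sum_mul, hc2]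
  have h3 : ∑ α : Fin 4, ∑ β : Fin 4,
      (if α = β then 2 * Complex.I / 3 else -Complex.I / 3 : ℂ) * triple ψb (γ' β) (π β)
      = -Complex.I / 3 * ∑ β : Fin 4, triple ψb (γ' β) (π β) := by
    rw [Finset.sum_comm]
    simp only [← Finset.sum_mul, hc1, ← Finset.mul_sum]
  rw [h3]
  simp only [Finset.sum_const, Finset.card_univ, Fintype.card_fin, nsmul_eq_mul]
  push_cast
  generalize (∑ α : Fin 4, triple (πb α) (γ' α) ψ) = X
  generalize (∑ α : Fin 4, triple ψb (γ' α) (π α)) = Y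
  have hI := Complex.I_sq
  have hI4 : Complex.I ^ 4 = 1 := Complex.I_pow_four
  linear_combination (-(Complex.I * m) / 6 * X + (Complex.I * m) / 6 * Y) * hI + (m / 3 * dotc ψb ψ) * hI4
end

section
/- Let σ : Fin 4 → Fin 4 → Matrix (Fin 4) (Fin 4) ℂ be a constant skew-symmetric family (σ α β = −(σ β α)), let m ≠ 0 be a real number, and let ψ, ψ̄ : ℝ⁴ → (Fin 4 → ℂ) be twice continuously differentiable. For μ, ν ∈ Fin 4 define j_μ^ν(x) := −(Complex.I/m) * ( ∑_α ∂_α ψ̄(x) ⬝ (σ α ν) ⬝ ∂_μ ψ(x) + ∑_α ∂_μ ψ̄(x) ⬝ (σ ν α) ⬝ ∂_α ψ(x) − (if μ = ν then 1 else 0) * ∑_{α,λ} ∂_α ψ̄(x) ⬝ (σ α λ) ⬝ ∂_λ ψ(x) ), where u ⬝ M ⬝ v := ∑_{j,k} u j * M j k * v k. Then for every μ ∈ Fin 4 and every x ∈ ℝ⁴, ∑_{ν ∈ Fin 4} ∂_ν (y ↦ j_μ^ν(y)) (x) = 0. -/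
/-- Partial derivative of a function on ℝ⁴ in the μ-th coordinate direction. -/
noncomputable def pd {E : Type*} [NormedAddCommGroup E] [NormedSpace ℝ E]
    (μ : Fin 4) (f : (Fin 4 → ℝ) → E) : (Fin 4 → ℝ) → E :=
  fun x => fderiv ℝ f x (Pi.single μ 1)

lemma triple_neg_mid (u : Fin 4 → ℂ) (M : Matrix (Fin 4) (Fin 4) ℂ) (v : Fin 4 → ℂ) :
    triple u (-M) v = - triple u M v := by
  simp [triple, Finset.sum_neg_distrib]

lemma pd_differentiable {f : (Fin 4 → ℝ) → (Fin 4 → ℂ)} (hf : ContDiff ℝ 2 f) (a : Fin 4) :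
    Differentiable ℝ (pd a f) := by
  have h : ContDiff ℝ 1 (fderiv ℝ f) := hf.fderiv_right (by norm_num)
  have h2 := h.differentiable (by norm_num)
  unfold pd
  fun_prop

lemma pd_comm {f : (Fin 4 → ℝ) → (Fin 4 → ℂ)} (hf : ContDiff ℝ 2 f) (a b : Fin 4)
    (x : Fin 4 → ℝ) : pd a (pd b f) x = pd b (pd a f) x := by
  have h : ContDiff ℝ 1 (fderiv ℝ f) := hf.fderiv_right (by norm_num)
  have h2 := h.differentiable (by norm_num)
  have key : ∀ c d : Fin 4, pd c (pd d f) x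
      = fderiv ℝ (fderiv ℝ f) x (Pi.single c 1) (Pi.single d 1) := by
    intro c d
    unfold pd
    rw [fderiv_clm_apply (h2 x) (by fun_prop)]
    simp
  rw [key, key]
  have hs : IsSymmSndFDerivAt ℝ f x := hf.contDiffAt.isSymmSndFDerivAt (by simp)
  exact hs _ _

lemma hasFDerivAt_triple {u v : (Fin 4 → ℝ) → (Fin 4 → ℂ)} (hu : Differentiable ℝ u)
    (hv : Differentiable ℝ v) (M : Matrix (Fin 4) (Fin 4) ℂ) :
    Differentiable ℝ (fun y => triple (u y) M (v y)) := by
  have hu' : ∀ i, Differentiable ℝ (fun y => u y i) := fun i => differentiable_pi.1 hu i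
  have hv' : ∀ i, Differentiable ℝ (fun y => v y i) := fun i => differentiable_pi.1 hv i
  unfold triple
  fun_prop

lemma pd_triple {u v : (Fin 4 → ℝ) → (Fin 4 → ℂ)} (hu : Differentiable ℝ u)
    (hv : Differentiable ℝ v) (M : Matrix (Fin 4) (Fin 4) ℂ) (a : Fin 4) (x : Fin 4 → ℝ) :
    pd a (fun y => triple (u y) M (v y)) x
      = triple (pd a u x) M (v x) + triple (u x) M (pd a v x) := by
  have hu' : ∀ i, HasFDerivAt (fun y => u y i)
      ((ContinuousLinearMap.proj i).comp (fderiv ℝ u x)) x :=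
    fun i => hasFDerivAt_pi'.1 (hu x).hasFDerivAt i
  have hv' : ∀ i, HasFDerivAt (fun y => v y i)
      ((ContinuousLinearMap.proj i).comp (fderiv ℝ v x)) x :=
    fun i => hasFDerivAt_pi'.1 (hv x).hasFDerivAt i
  have h := HasFDerivAt.fun_sum (u := Finset.univ) (fun i (_ : i ∈ Finset.univ) =>
    HasFDerivAt.fun_sum (u := Finset.univ) (fun k (_ : k ∈ Finset.univ) =>
      ((hu' i).mul_const (M i k)).fun_mul (hv' k)))
  unfold pd triple
  rw [HasFDerivAt.fderiv h]
  simp only [ContinuousLinearMap.sum_apply, ← Finset.sum_add_distrib]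
  refine Finset.sum_congr rfl fun i _ => Finset.sum_congr rfl fun k _ => ?_
  simp
  ring

lemma skew_sum (g : Fin 4 → Fin 4 → ℂ) (hg : ∀ a b, g a b = - g b a) :
    ∑ a : Fin 4, ∑ b : Fin 4, g a b = 0 := by
  have h : ∑ a : Fin 4, ∑ b : Fin 4, g a b = - ∑ a : Fin 4, ∑ b : Fin 4, g a b := by
    conv_lhs => rw [Finset.sum_comm]
    simp only [← Finset.sum_neg_distrib]
    exact Finset.sum_congr rfl fun a _ => Finset.sum_congr rfl fun b _ => hg b a
  exact self_eq_neg.1 h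

lemma pd_sum {g : Fin 4 → (Fin 4 → ℝ) → ℂ} (hg : ∀ a, Differentiable ℝ (g a)) (n : Fin 4)
    (x : Fin 4 → ℝ) : pd n (fun y => ∑ a : Fin 4, g a y) x = ∑ a : Fin 4, pd n (g a) x := by
  unfold pd
  rw [fderiv_fun_sum fun a _ => hg a x]
  simp

lemma pd_comb {A B C : (Fin 4 → ℝ) → ℂ} (hA : Differentiable ℝ A) (hB : Differentiable ℝ B)
    (hC : Differentiable ℝ C) (c k : ℂ) (n : Fin 4) (x : Fin 4 → ℝ) :
    pd n (fun y => c * (A y + B y - k * C y)) x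
      = c * (pd n A x + pd n B x - k * pd n C x) := by
  unfold pd
  rw [fderiv_const_mul (by fun_prop), fderiv_fun_sub (by fun_prop) (by fun_prop),
    fderiv_fun_add (by fun_prop) (by fun_prop), fderiv_const_mul (by fun_prop)]
  simp

/-- The difference `j_μ^ν` between the energy-momentum tensors of the
regularized and the symmetrized Dirac Lagrangians is divergence-free. -/
theorem dirac_energy_momentum_difference_divergence_free
    (σ : Fin 4 → Fin 4 → Matrix (Fin 4) (Fin 4) ℂ)
    (hσ : ∀ α β, σ α β = -(σ β α))
    (m : ℝ) (hm : m ≠ 0)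
    (ψ ψb : (Fin 4 → ℝ) → (Fin 4 → ℂ))
    (hψ : ContDiff ℝ 2 ψ) (hψb : ContDiff ℝ 2 ψb)
    (j : Fin 4 → Fin 4 → (Fin 4 → ℝ) → ℂ)
    (hj : ∀ μ ν x, j μ ν x = -(Complex.I / (m : ℂ)) *
      ((∑ α : Fin 4, triple (pd α ψb x) (σ α ν) (pd μ ψ x))
        + (∑ α : Fin 4, triple (pd μ ψb x) (σ ν α) (pd α ψ x))
        - (if μ = ν then (1 : ℂ) else 0) *
            ∑ α : Fin 4, ∑ l : Fin 4, triple (pd α ψb x) (σ α l) (pd l ψ x)))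
    (μ : Fin 4) (x : Fin 4 → ℝ) :
    ∑ ν : Fin 4, pd ν (j μ ν) x = 0 := by


  have db := pd_differentiable hψb
  have d := pd_differentiable hψ
  have D : ∀ a b c e, Differentiable ℝ (fun y => triple (pd a ψb y) (σ c e) (pd b ψ y)) :=
    fun a b c e => hasFDerivAt_triple (db a) (d b) _
  have P : ∀ a b c e n, pd n (fun y => triple (pd a ψb y) (σ c e) (pd b ψ y)) x
      = triple (pd n (pd a ψb) x) (σ c e) (pd b ψ x)
        + triple (pd a ψb x) (σ c e) (pd n (pd b ψ) x) :=
    fun a b c e n => pd_triple (db a) (d b) _ n x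
  have key : ∀ ν, pd ν (j μ ν) x = -(Complex.I / (m : ℂ)) *
      ((∑ α : Fin 4, (triple (pd ν (pd α ψb) x) (σ α ν) (pd μ ψ x)
          + triple (pd α ψb x) (σ α ν) (pd ν (pd μ ψ) x)))
        + (∑ α : Fin 4, (triple (pd ν (pd μ ψb) x) (σ ν α) (pd α ψ x)
          + triple (pd μ ψb x) (σ ν α) (pd ν (pd α ψ) x)))
        - (if μ = ν then (1 : ℂ) else 0) *
            ∑ α : Fin 4, ∑ l : Fin 4, (triple (pd ν (pd α ψb) x) (σ α l) (pd l ψ x)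
              + triple (pd α ψb x) (σ α l) (pd ν (pd l ψ) x))) := by
    intro ν
    have e : j μ ν = _ := funext (hj μ ν)
    simp only [← P]
    have D1 : Differentiable ℝ (fun y => ∑ α : Fin 4, triple (pd α ψb y) (σ α ν) (pd μ ψ y)) := by
      fun_prop
    have D2 : Differentiable ℝ (fun y => ∑ α : Fin 4, triple (pd μ ψb y) (σ ν α) (pd α ψ y)) := by
      fun_prop
    have D3' : ∀ α, Differentiable ℝ
        (fun y => ∑ l : Fin 4, triple (pd α ψb y) (σ α l) (pd l ψ y)) := by
      intro α; fun_prop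
    have D3 : Differentiable ℝ
        (fun y => ∑ α : Fin 4, ∑ l : Fin 4, triple (pd α ψb y) (σ α l) (pd l ψ y)) := by
      fun_prop
    rw [← pd_sum (fun α => D α μ α ν), ← pd_sum (fun α => D μ α ν α)]
    simp_rw [← fun α => pd_sum (fun l => D α l α l) ν x]
    rw [← pd_sum D3', e]
    exact pd_comb D1 D2 D3 _ _ ν x
  simp only [key, ← Finset.mul_sum]
  apply mul_eq_zero_of_right
  simp only [Finset.sum_sub_distrib, Finset.sum_add_distrib, ite_mul, one_mul, zero_mul,
    Finset.sum_ite_eq, Finset.mem_univ, if_true]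
  have s1 : ∑ ν : Fin 4, ∑ α : Fin 4, triple (pd ν (pd α ψb) x) (σ α ν) (pd μ ψ x) = 0 := by
    apply skew_sum
    intro a b
    rw [pd_comm hψb, hσ, triple_neg_mid]
  have s2 : ∑ ν : Fin 4, ∑ α : Fin 4, triple (pd μ ψb x) (σ ν α) (pd ν (pd α ψ) x) = 0 := by
    apply skew_sum
    intro a b
    rw [pd_comm hψ, hσ, triple_neg_mid]
  have s3 : ∑ ν : Fin 4, ∑ α : Fin 4, triple (pd α ψb x) (σ α ν) (pd ν (pd μ ψ) x)
      = ∑ α : Fin 4, ∑ l : Fin 4, triple (pd α ψb x) (σ α l) (pd μ (pd l ψ) x) := by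
    rw [Finset.sum_comm]
    simp only [pd_comm hψ μ]
  have s4 : ∑ ν : Fin 4, ∑ α : Fin 4, triple (pd ν (pd μ ψb) x) (σ ν α) (pd α ψ x)
      = ∑ α : Fin 4, ∑ l : Fin 4, triple (pd μ (pd α ψb) x) (σ α l) (pd l ψ x) := by
    simp only [pd_comm hψb μ]
  rw [s1, s2, s3, s4]
  ring
end
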